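/- arXiv:1509.08263 — 7 statements merged into one kernel-verified Lean document; each statement's English description precedes it below -/
import Mathlib

section
/- Let x be an n×n complex hermitian positive semidefinite matrix of rank 1 and let u be an n×n complex hermitian matrix. Then the matrix i·[u, x] (i the imaginary unit) is hermitian and lies in the image of the Jordan multiplication operator L_x on hermitian matrices; that is, there exists an n×n complex hermitian matrix w such that (1/2)(x·w + w·x) = i·(u·x − x·u). -/
open Matrix
open scoped ComplexOrder

theorem i_commutator_hermitian_mem_image_Lx
    (n : ℕ) (hn : 2 ≤ n) (x u : Matrix (Fin n) (Fin n) ℂ)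
    (hherm : x.IsHermitian) (hpsd : x.PosSemidef) (hrank : x.rank = 1)
    (hu : u.IsHermitian) :
    (Complex.I • (u * x - x * u)).IsHermitian ∧
    ∃ w : Matrix (Fin n) (Fin n) ℂ, w.IsHermitian ∧
      (1 / 2 : ℂ) • (x * w + w * x) = Complex.I • (u * x - x * u) := by
  have hH : (Complex.I • (u * x - x * u)).IsHermitian := by
    unfold Matrix.IsHermitian
    rw [conjTranspose_smul, conjTranspose_sub, conjTranspose_mul, conjTranspose_mul,
      hherm.eq, hu.eq]
    simp only [Complex.star_def, Complex.conj_I, neg_smul, ← smul_neg, neg_sub]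
  refine ⟨hH, ?_⟩
  -- `x` is an outer product
  obtain ⟨v, c, hvc⟩ : ∃ v c : Fin n → ℂ, ∀ i j, x i j = c j * v i := by
    unfold Matrix.rank at hrank
    obtain ⟨v, -, hv⟩ := finrank_eq_one_iff'.mp hrank
    choose c hc using fun j : Fin n =>
      hv ⟨x.mulVecLin (Pi.single j 1), LinearMap.mem_range_self _ _⟩
    refine ⟨v.1, c, fun i j => ?_⟩
    have h := congrFun (congrArg Subtype.val (hc j)) i
    simpa using h.symm
  have hsq : x * x = x.trace • x := by
    ext i j
    simp only [Matrix.mul_apply, Matrix.smul_apply, Matrix.trace, Matrix.diag, smul_eq_mul,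
      Finset.sum_mul, hvc]
    exact Finset.sum_congr rfl fun k _ => by ring
  have ht : x.trace ≠ 0 := by
    intro h0
    rw [h0, zero_smul] at hsq
    have hx : x = 0 := by
      apply Matrix.conjTranspose_mul_self_eq_zero.mp
      rw [hherm.eq, hsq]
    rw [hx] at hrank
    simp at hrank
  have htr : star x.trace = x.trace := by
    rw [← Matrix.trace_conjTranspose, hherm.eq]
  refine ⟨(2 / x.trace) • (Complex.I • (u * x - x * u)), ?_, ?_⟩
  · unfold Matrix.IsHermitian
    rw [conjTranspose_smul, hH.eq, star_div₀, htr]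
    simp
  · have key : x * (u * x - x * u) + (u * x - x * u) * x = x.trace • (u * x - x * u) := by
      have h1 : x * (x * u) = x.trace • (x * u) := by rw [← mul_assoc, hsq, smul_mul_assoc]
      have h2 : u * x * x = x.trace • (u * x) := by rw [mul_assoc, hsq, mul_smul_comm]
      rw [mul_sub, sub_mul, h1, h2, smul_sub, mul_assoc x u x]
      abel
    simp only [mul_smul_comm, smul_mul_assoc, ← smul_add]
    rw [key]
    simp only [smul_smul]
    congr 1
    field_simp
end

section
/- Let x be an n×n complex hermitian positive semidefinite matrix of rank 1 and let π be an n×n complex hermitian matrix lying in the image of L_x, i.e. π = x∘w for some hermitian matrix w. Then π·x + x·π = (tr x)·π + (tr π)·x, i.e. 2·(π∘x) = (tr x)·π + (tr π)·x. -/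
open Matrix
open scoped ComplexOrder

/-- The Jordan product of two matrices. -/
noncomputable def jordanProd {n : ℕ} (a b : Matrix (Fin n) (Fin n) ℂ) :
    Matrix (Fin n) (Fin n) ℂ :=
  (1 / 2 : ℂ) • (a * b + b * a)

theorem rank_one_form {n : ℕ} (x : Matrix (Fin n) (Fin n) ℂ) (h : x.rank = 1) :
    ∃ u v : Fin n → ℂ, x = vecMulVec u v := by
  unfold Matrix.rank at h
  obtain ⟨u, -, hu⟩ := finrank_eq_one_iff'.1 h
  have key : ∀ j, ∃ c : ℂ, c • (u : Fin n → ℂ) = x.col j := by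
    intro j
    obtain ⟨c, hc⟩ := hu ⟨x.col j, Pi.single j 1, by simp⟩
    exact ⟨c, congrArg Subtype.val hc⟩
  choose v hv using key
  refine ⟨u, v, ?_⟩
  ext i j
  have := congrFun (hv j) i
  simp only [Pi.smul_apply, smul_eq_mul, Matrix.col_apply] at this
  rw [vecMulVec_apply, ← this, mul_comm]

theorem rank_one_sandwich {n : ℕ} (x w : Matrix (Fin n) (Fin n) ℂ) (h : x.rank = 1) :
    x * w * x = (x * w).trace • x := by
  obtain ⟨u, v, rfl⟩ := rank_one_form x h
  rw [vecMulVec_mul, vecMulVec_mul_vecMulVec, trace_vecMulVec, dotProduct_comm]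
  ext i j
  simp [vecMulVec_apply]
  ring

theorem rank_one_psd_tangent_vector_identity
    (n : ℕ) (hn : 2 ≤ n) (x p : Matrix (Fin n) (Fin n) ℂ)
    (hherm : x.IsHermitian) (hpsd : x.PosSemidef) (hrank : x.rank = 1)
    (hp : ∃ w : Matrix (Fin n) (Fin n) ℂ, w.IsHermitian ∧ p = jordanProd x w) :
    p * x + x * p = x.trace • p + p.trace • x := by
  obtain ⟨w, -, rfl⟩ := hp
  have h1 := rank_one_sandwich x w hrank
  have h2 := rank_one_sandwich x 1 hrank
  rw [mul_one] at h2
  have ht : (jordanProd x w).trace = (x * w).trace := by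
    simp only [jordanProd, trace_smul, trace_add, trace_mul_comm w x, smul_eq_mul]
    ring
  have e1 : w * x * x = x.trace • (w * x) := by rw [mul_assoc, h2, mul_smul_comm]
  have e2 : x * (x * w) = x.trace • (x * w) := by rw [← mul_assoc, h2, smul_mul_assoc]
  have e3 : x * (w * x) = (x * w).trace • x := by rw [← mul_assoc, h1]
  rw [ht]
  simp only [jordanProd, smul_mul_assoc, mul_smul_comm, add_mul, mul_add, e1, e2, e3, h1]
  module
end

section
/- Let x be an n×n complex hermitian positive semidefinite matrix of rank 1 and let π be an n×n complex hermitian matrix lying in the image of L_x, i.e. π = x∘w for some hermitian matrix w. Then S_{πx}([π, x]) = (1/4)·(tr x)·[π·π, x] + (1/4)·(tr π)·(tr x)·[π, x], where S_{πx}(z) = π∘(x∘z) − x∘(π∘z) + (π∘x)∘z. -/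
open Matrix
open scoped ComplexOrder

/-- The operator `S_{uv}` sending `z` to `u∘(v∘z) − v∘(u∘z) + (u∘v)∘z`. -/
noncomputable def Sop {n : ℕ} (u v z : Matrix (Fin n) (Fin n) ℂ) :
    Matrix (Fin n) (Fin n) ℂ :=
  jordanProd u (jordanProd v z) - jordanProd v (jordanProd u z)
    + jordanProd (jordanProd u v) z

theorem vecMulVec_sandwich {n : ℕ} (x : Matrix (Fin n) (Fin n) ℂ) (hrank : x.rank = 1)
    (w : Matrix (Fin n) (Fin n) ℂ) : x * w * x = (x * w).trace • x := by
  have hfin : Module.finrank ℂ (LinearMap.range x.mulVecLin) = 1 := hrank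
  obtain ⟨⟨u, hu⟩, -, h⟩ := finrank_eq_one_iff'.1 hfin
  have hc : ∀ j, ∃ c : ℂ, ∀ i, x i j = c * u i := by
    intro j
    obtain ⟨c, hc⟩ := h ⟨x.mulVecLin (Pi.single j 1), LinearMap.mem_range_self _ _⟩
    refine ⟨c, fun i => ?_⟩
    have := congrFun (congrArg Subtype.val hc) i
    simpa using this.symm
  choose v hv using hc
  have hx : x = vecMulVec u v := by
    ext i j
    rw [hv, vecMulVec_apply, mul_comm]
  rw [hx, vecMulVec_mul, vecMulVec_mul_vecMulVec, trace_vecMulVec, vecMulVec_smul,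
    dotProduct_comm]

theorem rank_one_psd_S_identity
    (n : ℕ) (hn : 2 ≤ n) (x p : Matrix (Fin n) (Fin n) ℂ)
    (hherm : x.IsHermitian) (hpsd : x.PosSemidef) (hrank : x.rank = 1)
    (hp : ∃ w : Matrix (Fin n) (Fin n) ℂ, w.IsHermitian ∧ p = jordanProd x w) :
    Sop p x (p * x - x * p)
      = ((1 / 4 : ℂ) * x.trace) • (p * p * x - x * (p * p))
        + ((1 / 4 : ℂ) * p.trace * x.trace) • (p * x - x * p) := by
  have hS := vecMulVec_sandwich x hrank
  obtain ⟨w, -, hw⟩ := hp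
  have hxx : x * x = x.trace • x := by
    have h1 := hS 1
    simpa using h1
  have hxwx := hS w
  have hxwwx := hS (w * w)
  have htr : p.trace = (x * w).trace := by
    rw [hw, jordanProd, trace_smul, trace_add, trace_mul_comm w x, smul_eq_mul]
    ring
  rw [← htr] at hxwx
  generalize x.trace = t at *
  generalize (x * (w * w)).trace = q at *
  generalize p.trace = s at *
  have e1 : ∀ z, x * (x * z) = t • (x * z) := fun z => by
    rw [← mul_assoc, hxx, smul_mul_assoc]
  have e2 : x * (w * x) = s • x := by rw [← mul_assoc, hxwx]
  have e3 : ∀ z, x * (w * (x * z)) = s • (x * z) := fun z => by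
    rw [← mul_assoc, ← mul_assoc, hxwx, smul_mul_assoc]
  have e4 : x * (w * (w * x)) = q • x := by
    rw [← mul_assoc w, ← mul_assoc x, hxwwx]
  have hpx : p * x = (1 / 2 : ℂ) • (s • x + t • (w * x)) := by
    rw [hw, jordanProd, smul_mul_assoc, add_mul, mul_assoc, mul_assoc, e2, hxx, mul_smul_comm]
  have hxp : x * p = (1 / 2 : ℂ) • (t • (x * w) + s • x) := by
    rw [hw, jordanProd, mul_smul_comm, mul_add, e1, e2]
  have hxpx : x * (p * x) = (t * s) • x := by
    rw [hpx, mul_smul_comm, mul_add, mul_smul_comm, mul_smul_comm, hxx, e2]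
    module
  have hcomm : p * p * x - x * (p * p) = s • (p * x - x * p) := by
    have a1 : p * p * x = (1 / 2 : ℂ) • (s • (p * x) + t • (p * (w * x))) := by
      rw [mul_assoc, hpx, mul_smul_comm, mul_add, mul_smul_comm, mul_smul_comm, hpx]
    have a2 : x * (p * p) = (1 / 2 : ℂ) • (t • (x * w * p) + s • (x * p)) := by
      rw [← mul_assoc, hxp, smul_mul_assoc, add_mul, smul_mul_assoc, smul_mul_assoc, hxp]
    have a3 : p * (w * x) = (1 / 2 : ℂ) • (q • x + s • (w * x)) := by
      rw [hw, jordanProd, smul_mul_assoc, add_mul, mul_assoc, mul_assoc, e4, e2, mul_smul_comm]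
    have a4 : x * w * p = (1 / 2 : ℂ) • (s • (x * w) + q • x) := by
      rw [hw, jordanProd, mul_smul_comm, mul_add, mul_assoc, mul_assoc, e3, e4]
    rw [a1, a2, a3, a4, hpx, hxp]
    module
  have hL : Sop p x (p * x - x * p)
      = (1 / 2 : ℂ) • (p * (x * (p * x)) - x * (p * x) * p) := by
    simp only [Sop, jordanProd, mul_add, add_mul, mul_sub, sub_mul, smul_mul_assoc,
      mul_smul_comm, mul_assoc]
    module
  rw [hL, hxpx, hcomm, mul_smul_comm, smul_mul_assoc]
  module
end

section
/- Primary quadratic relation (Theorem 6.1(i)): with the notation of the context, (2/n)·Σ_α 𝓛_{e_α}² − 𝓛_e² − 𝒳_e·𝒴_e = −μ². -/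
open Matrix
open scoped ComplexOrder

/-- The Jordan triple product `{uvw} = u∘(v∘w) − v∘(u∘w) + (u∘v)∘w`. -/
noncomputable def jTriple {n : ℕ} (u v w : Matrix (Fin n) (Fin n) ℂ) :
    Matrix (Fin n) (Fin n) ℂ :=
  jordanProd u (jordanProd v w) - jordanProd v (jordanProd u w)
    + jordanProd (jordanProd u v) w

/-- The real inner product `⟨u|v⟩ = (1/n)·Re(tr(u·v))`. -/
noncomputable def jInner {n : ℕ} (u v : Matrix (Fin n) (Fin n) ℂ) : ℝ :=
  (1 / n : ℝ) * ((u * v).trace).re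

/-- `𝒴_u = ⟨u|x⟩`. -/
noncomputable def Yfun {n : ℕ} (x u : Matrix (Fin n) (Fin n) ℂ) : ℝ :=
  jInner u x

/-- `𝓛_u = ⟨u∘x|π⟩`. -/
noncomputable def Lfun {n : ℕ} (x p u : Matrix (Fin n) (Fin n) ℂ) : ℝ :=
  jInner (jordanProd u x) p

/-- `𝓛_{u,v} = ⟨u∘(v∘x) − v∘(u∘x)|π⟩ − μ·i·tr(x·[u,v])/(2·tr x)`. -/
noncomputable def LLfun {n : ℕ} (μ : ℝ) (x p u v : Matrix (Fin n) (Fin n) ℂ) : ℝ :=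
  jInner (jordanProd u (jordanProd v x) - jordanProd v (jordanProd u x)) p
    - μ * (Complex.I * (x * (u * v - v * u)).trace).re / (2 * (x.trace).re)

/-- `𝒳_u = ⟨x|{πuπ}⟩ + n·μ²·Re(tr(x·u))/(tr x)² − μ·i·tr(x·[u,π])/(tr x)`. -/
noncomputable def Xfun {n : ℕ} (μ : ℝ) (x p u : Matrix (Fin n) (Fin n) ℂ) : ℝ :=
  jInner x (jTriple p u p) + (n : ℝ) * μ ^ 2 * ((x * u).trace).re / ((x.trace).re) ^ 2
    - μ * (Complex.I * (x * (u * p - p * u)).trace).re / (x.trace).re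

theorem aux_rank_one {n : ℕ} (x : Matrix (Fin n) (Fin n) ℂ) (h : x.rank = 1) :
    ∃ a b : Fin n → ℂ, x = vecMulVec a b := by
  rw [Matrix.rank] at h
  obtain ⟨v, -, hv⟩ := finrank_eq_one_iff'.1 h
  choose c hc using hv
  refine ⟨v.1, fun j => c ⟨x.mulVecLin (Pi.single j 1), ⟨_, rfl⟩⟩, ?_⟩
  ext i j
  have := congrArg (fun z => z.1 i) (hc ⟨x.mulVecLin (Pi.single j 1), ⟨_, rfl⟩⟩)
  simp at this
  simp [vecMulVec_apply, ← this, mul_comm]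

theorem aux_sandwich {n : ℕ} (x : Matrix (Fin n) (Fin n) ℂ) (h : x.rank = 1)
    (p : Matrix (Fin n) (Fin n) ℂ) : x * p * x = (x * p).trace • x := by
  obtain ⟨a, b, rfl⟩ := aux_rank_one x h
  rw [vecMulVec_mul, vecMulVec_mul_vecMulVec, trace_vecMulVec, dotProduct_comm]
  ext i j
  simp [vecMulVec_apply]
  ring

theorem aux_im {n : ℕ} (x p : Matrix (Fin n) (Fin n) ℂ) (hx : x.IsHermitian)
    (hp : p.IsHermitian) : (x * p).trace.im = 0 := by
  have h : star (x * p).trace = (x * p).trace := by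
    rw [← trace_conjTranspose, conjTranspose_mul, hx.eq, hp.eq, trace_mul_comm]
  exact Complex.conj_eq_iff_im.1 h

theorem aux_jordan_herm {n : ℕ} (x p : Matrix (Fin n) (Fin n) ℂ) (hx : x.IsHermitian)
    (hp : p.IsHermitian) : (jordanProd x p).IsHermitian := by
  unfold jordanProd
  rw [IsHermitian, conjTranspose_smul, conjTranspose_add, conjTranspose_mul, conjTranspose_mul,
    hx.eq, hp.eq, add_comm]
  simp

theorem aux_L {n : ℕ} (x p u : Matrix (Fin n) (Fin n) ℂ) :
    Lfun x p u = jInner u (jordanProd x p) := by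
  unfold Lfun jInner jordanProd
  congr 2
  simp only [smul_mul_assoc, mul_smul_comm, trace_smul, add_mul, mul_add, trace_add]
  rw [Matrix.trace_mul_cycle' u p x, Matrix.mul_assoc u x p, ← Matrix.mul_assoc x u p]

theorem aux_parseval {n : ℕ} (E : Fin (n ^ 2) → Matrix (Fin n) (Fin n) ℂ)
    (y : Matrix (Fin n) (Fin n) ℂ)
    (h : y = ∑ α, (jInner (E α) y : ℂ) • E α) :
    ∑ α, (jInner (E α) y) ^ 2 = jInner y y := by
  have h2 : (y * y).trace = ∑ α, (jInner (E α) y : ℂ) * (E α * y).trace := by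
    conv_lhs => rw [show y * y = (∑ α, (jInner (E α) y : ℂ) • E α) * y by rw [← h]]
    simp [Finset.sum_mul, trace_sum]
  rw [show jInner y y = (1 / n : ℝ) * ((y * y).trace).re from rfl, h2]
  simp only [Complex.re_sum, Complex.re_ofReal_mul, Finset.mul_sum]
  refine Finset.sum_congr rfl fun α _ => ?_
  rw [sq]
  conv_lhs => rhs; unfold jInner
  ring

theorem aux_tr {n : ℕ} (x : Matrix (Fin n) (Fin n) ℂ) (h : x.rank = 1)
    (p : Matrix (Fin n) (Fin n) ℂ) :
    (jordanProd x p * jordanProd x p).trace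
      = (1 / 2 : ℂ) * ((x * p).trace ^ 2 + x.trace * (x * (p * p)).trace) := by
  have h1 := aux_sandwich x h p
  have h2 := aux_sandwich x h 1
  rw [mul_one] at h2
  have e1 : (x * p * (x * p)).trace = (x * p).trace ^ 2 := by
    rw [← Matrix.mul_assoc, h1, smul_mul_assoc, trace_smul, smul_eq_mul, sq]
  have e2 : (p * x * (p * x)).trace = (x * p).trace ^ 2 := by
    rw [Matrix.mul_assoc p, ← Matrix.mul_assoc x, h1, mul_smul_comm, trace_smul, smul_eq_mul, sq,
      trace_mul_comm p x]
  have e3 : (x * p * (p * x)).trace = x.trace * (x * (p * p)).trace := by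
    rw [trace_mul_comm, Matrix.mul_assoc p, ← Matrix.mul_assoc x, h2, smul_mul_assoc,
      mul_smul_comm, trace_smul, smul_eq_mul, trace_mul_comm p, Matrix.mul_assoc]
  have e4 : (p * x * (x * p)).trace = x.trace * (x * (p * p)).trace := by
    rw [trace_mul_comm, e3]
  unfold jordanProd
  simp only [smul_mul_assoc, mul_smul_comm, trace_smul, add_mul, mul_add, trace_add, e1, e2, e3, e4,
    smul_eq_mul]
  ring

theorem primary_quadratic_relation
    (n : ℕ) (hn : 2 ≤ n) (μ : ℝ)
    (x : Matrix (Fin n) (Fin n) ℂ)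
    (hherm : x.IsHermitian) (hpsd : x.PosSemidef) (hrank : x.rank = 1)
    (p w : Matrix (Fin n) (Fin n) ℂ) (hw : w.IsHermitian) (hp : p = jordanProd x w)
    (E : Fin (n ^ 2) → Matrix (Fin n) (Fin n) ℂ)
    (hEherm : ∀ α, (E α).IsHermitian)
    (hEorth : ∀ α β, jInner (E α) (E β) = if α = β then 1 else 0)
    (hEspan : ∀ u : Matrix (Fin n) (Fin n) ℂ, u.IsHermitian →
      u = ∑ α, (jInner (E α) u : ℂ) • E α) :
    (2 / (n : ℝ)) * (∑ α, (Lfun x p (E α)) ^ 2)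
      - (Lfun x p 1) ^ 2 - Xfun μ x p 1 * Yfun x 1 = -μ ^ 2 := by
  have hpH : p.IsHermitian := hp ▸ aux_jordan_herm x w hherm hw
  have hyH := aux_jordan_herm x p hherm hpH
  have hn0 : (n : ℝ) ≠ 0 := by positivity
  have him := aux_im x p hherm hpH
  have hti : x.trace.im = 0 := by simpa using aux_im x 1 hherm isHermitian_one
  have ht : x.trace.re ≠ 0 := by
    intro h0
    have : x.trace = 0 := Complex.ext h0 hti
    rw [hpsd.trace_eq_zero_iff] at this
    simp [this] at hrank
  have hY : Yfun x 1 = (1 / n : ℝ) * x.trace.re := by simp [Yfun, jInner]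
  have hL : Lfun x p 1 = (1 / n : ℝ) * (x * p).trace.re := by
    have e : (jordanProd x p).trace = (x * p).trace := by
      simp only [jordanProd, trace_smul, trace_add, trace_mul_comm p x, smul_eq_mul]; ring
    rw [aux_L, jInner, one_mul, e]
  have hT : jTriple p 1 p = p * p := by
    have h1 : jordanProd 1 p = p := by
      ext i j; simp [jordanProd]; ring
    have h2 : jordanProd p 1 = p := by
      ext i j; simp [jordanProd]; ring
    have h3 : ∀ q : Matrix (Fin n) (Fin n) ℂ, jordanProd 1 q = q := by
      intro q; ext i j; simp [jordanProd]; ring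
    rw [jTriple, h1, h2, h3]
    ext i j; simp [jordanProd]; ring
  have hX : Xfun μ x p 1 = (1 / n : ℝ) * (x * (p * p)).trace.re + n * μ ^ 2 / x.trace.re := by
    simp only [Xfun, hT, jInner, mul_one, one_mul, sub_self, mul_zero, trace_zero, Complex.zero_re,
      zero_div, sub_zero]
    field_simp
  have hS : ∑ α, (Lfun x p (E α)) ^ 2
      = (1 / n : ℝ) * (1 / 2 * ((x * p).trace.re ^ 2 + x.trace.re * (x * (p * p)).trace.re)) := by
    simp only [aux_L]
    rw [aux_parseval E _ (hEspan _ hyH), jInner, aux_tr x hrank p]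
    congr 1
    simp [sq, Complex.mul_re, him, hti]
  rw [hS, hL, hX, hY]
  field_simp
  ring
end

section
/- Theorem 6.1(iv): with the notation of the context, Σ_α 𝒳_{e_α}² = n·𝒳_e² and Σ_α 𝒴_{e_α}² = n·𝒴_e². -/
open Matrix
open scoped ComplexOrder

theorem aux_sum {n : ℕ} (hn : 2 ≤ n)
    (E : Fin (n ^ 2) → Matrix (Fin n) (Fin n) ℂ)
    (hEspan : ∀ u : Matrix (Fin n) (Fin n) ℂ, u.IsHermitian →
      u = ∑ α, (jInner (E α) u : ℂ) • E α)
    (Z : Matrix (Fin n) (Fin n) ℂ) (hZ : Z.IsHermitian)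
    (hr : (Z * Z).trace = Z.trace ^ 2) :
    (∑ α, (jInner (E α) Z) ^ 2) = (n : ℝ) * (jInner 1 Z) ^ 2 := by
  have h1 : ∑ α, (jInner (E α) Z) ^ 2 = jInner Z Z := by
    have h2 : (Z * Z).trace = ∑ α, (jInner (E α) Z : ℂ) * (E α * Z).trace := by
      conv_lhs => rw [show Z * Z = (∑ α, (jInner (E α) Z : ℂ) • E α) * Z by
        rw [← hEspan Z hZ]]
      simp [Finset.sum_mul, Matrix.trace_sum]
    unfold jInner at h2 ⊢
    rw [h2, Complex.re_sum, Finset.mul_sum]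
    refine Finset.sum_congr rfl fun α _ => ?_
    rw [Complex.re_ofReal_mul]
    ring
  have him : (Z.trace).im = 0 := by
    have h := congrArg Matrix.trace hZ.eq
    rw [Matrix.trace_conjTranspose] at h
    exact Complex.conj_eq_iff_im.mp h
  have hn0 : (n : ℝ) ≠ 0 := by positivity
  rw [h1]
  unfold jInner
  rw [hr, one_mul, pow_two, Complex.mul_re, him]
  field_simp
  ring

theorem aux_rank {n : ℕ} (x : Matrix (Fin n) (Fin n) ℂ) (hrank : x.rank = 1) :
    ∃ a b : Fin n → ℂ, x = Matrix.vecMulVec a b := by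
  rw [Matrix.rank, finrank_eq_one_iff'] at hrank
  obtain ⟨⟨v, hv⟩, -, h⟩ := hrank
  choose c hc using fun j => h ⟨x.mulVecLin (Pi.single j 1), LinearMap.mem_range_self _ _⟩
  refine ⟨v, c, ?_⟩
  ext i j
  have := congrFun (congrArg Subtype.val (hc j)) i
  simp [Matrix.vecMulVec_apply] at this ⊢
  rw [← this]; ring

theorem aux_tr_s13 {n : ℕ} (a b : Fin n → ℂ) :
    (Matrix.vecMulVec a b * Matrix.vecMulVec a b).trace = (Matrix.vecMulVec a b).trace ^ 2 := by
  rw [Matrix.vecMulVec_mul_vecMulVec, Matrix.trace_vecMulVec, Matrix.trace_vecMulVec]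
  simp [dotProduct_comm a b, dotProduct_smul, pow_two]

theorem aux_triple {n : ℕ} (p u : Matrix (Fin n) (Fin n) ℂ) : jTriple p u p = p * u * p := by
  unfold jTriple jordanProd
  simp only [mul_add, add_mul, smul_add, smul_mul_assoc, mul_smul_comm, smul_smul, mul_assoc]
  module

theorem aux_X {n : ℕ} (hn : 2 ≤ n) (μ : ℝ) (x p u : Matrix (Fin n) (Fin n) ℂ) (c : ℂ)
    (hc : c = Complex.I * ((n * μ / x.trace.re : ℝ) : ℂ)) :
    Xfun μ x p u = jInner u ((p + c • 1) * x * (p - c • 1)) := by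
  have hn0 : (n : ℝ) ≠ 0 := by positivity
  have e1 : (x * (p * u * p)).trace = (u * (p * x * p)).trace := by
    rw [show x * (p * u * p) = (x * p) * (u * p) by noncomm_ring, Matrix.trace_mul_comm]
    congr 1; noncomm_ring
  have e2 : (x * (u * p)).trace = (u * (p * x)).trace := by
    rw [Matrix.trace_mul_comm, mul_assoc]
  have e3 : (x * (p * u)).trace = (u * (x * p)).trace := by
    rw [← mul_assoc, Matrix.trace_mul_comm]
  have e4 : (u * ((p + c • 1) * x * (p - c • 1))).trace =
      (u * (p * x * p)).trace - c * (u * (p * x)).trace + c * (u * (x * p)).trace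
       - c ^ 2 * (x * u).trace := by
    rw [Matrix.trace_mul_comm x u]
    simp only [add_mul, mul_add, mul_sub, smul_mul_assoc, mul_smul_comm, one_mul, mul_one,
      Matrix.trace_add, Matrix.trace_sub, Matrix.trace_smul, smul_eq_mul, mul_assoc]
    ring
  have hc2 : c ^ 2 = ((-(n * μ / x.trace.re) ^ 2 : ℝ) : ℂ) := by
    rw [hc, mul_pow, Complex.I_sq]; push_cast; ring
  unfold Xfun jInner
  rw [aux_triple, e4, mul_sub x, Matrix.trace_sub, e1, e2, e3, hc2, hc]
  simp only [Complex.sub_re, Complex.add_re, Complex.mul_re, Complex.mul_im, Complex.I_re,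
    Complex.I_im, Complex.ofReal_re, Complex.ofReal_im, Complex.sub_im]
  by_cases ht : x.trace.re = 0
  · simp [ht]
  · field_simp
    ring

theorem quadratic_relation_iv
    (n : ℕ) (hn : 2 ≤ n) (μ : ℝ)
    (x : Matrix (Fin n) (Fin n) ℂ)
    (hherm : x.IsHermitian) (hpsd : x.PosSemidef) (hrank : x.rank = 1)
    (p w : Matrix (Fin n) (Fin n) ℂ) (hw : w.IsHermitian) (hp : p = jordanProd x w)
    (E : Fin (n ^ 2) → Matrix (Fin n) (Fin n) ℂ)
    (hEherm : ∀ α, (E α).IsHermitian)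
    (hEorth : ∀ α β, jInner (E α) (E β) = if α = β then 1 else 0)
    (hEspan : ∀ u : Matrix (Fin n) (Fin n) ℂ, u.IsHermitian →
      u = ∑ α, (jInner (E α) u : ℂ) • E α)
    :
    (∑ α, (Xfun μ x p (E α)) ^ 2) = (n : ℝ) * (Xfun μ x p 1) ^ 2 ∧
    (∑ α, (Yfun x (E α)) ^ 2) = (n : ℝ) * (Yfun x 1) ^ 2 := by
  obtain ⟨a, b, hab⟩ := aux_rank x hrank
  have hpH : pᴴ = p := by
    rw [hp, jordanProd, Matrix.conjTranspose_smul, Matrix.conjTranspose_add,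
      Matrix.conjTranspose_mul, Matrix.conjTranspose_mul, hherm.eq, hw.eq, add_comm]
    simp
  constructor
  · obtain ⟨c, hc⟩ : ∃ c : ℂ, c = Complex.I * ((n * μ / x.trace.re : ℝ) : ℂ) := ⟨_, rfl⟩
    have hcs : star c = -c := by
      rw [hc, star_mul']
      simp only [Complex.star_def, Complex.conj_I, Complex.conj_ofReal, neg_mul]
    simp only [aux_X hn μ x p _ c hc]
    apply aux_sum hn E hEspan
    · rw [Matrix.IsHermitian, Matrix.conjTranspose_mul, Matrix.conjTranspose_mul,
        Matrix.conjTranspose_sub, Matrix.conjTranspose_add, Matrix.conjTranspose_smul, hcs,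
        Matrix.conjTranspose_one, hpH, hherm.eq, mul_assoc, neg_smul, sub_neg_eq_add,
        ← sub_eq_add_neg]
    · rw [hab, Matrix.mul_vecMulVec, Matrix.vecMulVec_mul]
      exact aux_tr_s13 _ _
  · apply aux_sum hn E hEspan x hherm
    rw [hab]
    exact aux_tr_s13 _ _
end

section
/- Kepler Hamiltonian from the dynamic symmetry (example, Section 3.3): with the notation of the context, ⟨x | π∘π⟩ = r·|p|², and consequently (1/2)·⟨x|π∘π⟩/⟨e|x⟩ − 1/⟨e|x⟩ = (1/2)·|p|² − 1/|q|. -/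
open Matrix

/-- The Jordan product on `V = ℝ × ℝ³` (the Jordan algebra `Γ(3)`). -/
def gammaProd (a b : ℝ × (Fin 3 → ℝ)) : ℝ × (Fin 3 → ℝ) :=
  (a.1 * b.1 + a.2 ⬝ᵥ b.2, a.1 • b.2 + b.1 • a.2)

/-- The inner product on `V = ℝ × ℝ³`, the standard one on `ℝ⁴`. -/
def gammaInner (a b : ℝ × (Fin 3 → ℝ)) : ℝ :=
  a.1 * b.1 + a.2 ⬝ᵥ b.2

theorem kepler_hamiltonian_from_dynamic_symmetry
    (q p : Fin 3 → ℝ) (hq : q ≠ 0) :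
    let r : ℝ := Real.sqrt (q ⬝ᵥ q)
    let x : ℝ × (Fin 3 → ℝ) := (r, q)
    let π : ℝ × (Fin 3 → ℝ) := ((p ⬝ᵥ q) / (2 * r), p - ((p ⬝ᵥ q) / (2 * r ^ 2)) • q)
    let e : ℝ × (Fin 3 → ℝ) := (1, 0)
    gammaInner x (gammaProd π π) = r * (p ⬝ᵥ p) ∧
    (1 / 2 : ℝ) * gammaInner x (gammaProd π π) / gammaInner e x - 1 / gammaInner e x
      = (1 / 2 : ℝ) * (p ⬝ᵥ p) - 1 / r := by
  intro r x π e
  have hpos : 0 < q ⬝ᵥ q := by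
    refine lt_of_le_of_ne ?_ ?_
    · simp only [dotProduct]
      exact Finset.sum_nonneg fun i _ => mul_self_nonneg _
    · intro h
      exact hq (dotProduct_self_eq_zero.mp h.symm)
  have hr : 0 < r := Real.sqrt_pos.mpr hpos
  have hr0 : r ≠ 0 := hr.ne'
  have hr2 : q ⬝ᵥ q = r ^ 2 := (Real.sq_sqrt hpos.le).symm
  have h1 : gammaInner x (gammaProd π π) = r * (p ⬝ᵥ p) := by
    simp only [x, π, gammaInner, gammaProd, dotProduct_add, dotProduct_smul, dotProduct_sub,
      sub_dotProduct, smul_dotProduct, smul_eq_mul, hr2, dotProduct_comm q p]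
    field_simp
    ring
  have h2 : gammaInner e x = r := by
    simp [e, x, gammaInner]
  refine ⟨h1, ?_⟩
  rw [h1, h2]
  field_simp
end

section
/- Laplace–Runge–Lenz vector of the Kepler problem (example, Section 3.3): with the notation of the context, for i = 1, 2, 3 let εᵢ = (0, eᵢ) ∈ V (eᵢ the standard basis vectors of ℝ³), and define 𝒳_u = ⟨x | {πuπ}⟩, 𝒴_u = ⟨u | x⟩ for u ∈ V, and A_i = (1/2)·(𝒳_{εᵢ} − 𝒴_{εᵢ}·𝒳_e/𝒴_e) + 𝒴_{εᵢ}/𝒴_e. Then the vector (A₁, A₂, A₃) ∈ ℝ³ equals (q × p) × p + q/|q|, where × is the cross product on ℝ³. -/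
open Matrix

/-- The Jordan triple product `{uvw} = u∘(v∘w) − v∘(u∘w) + (u∘v)∘w` on `Γ(3)`. -/
def gammaTriple (u v w : ℝ × (Fin 3 → ℝ)) : ℝ × (Fin 3 → ℝ) :=
  gammaProd u (gammaProd v w) - gammaProd v (gammaProd u w) + gammaProd (gammaProd u v) w

theorem LRL_X_e (q p : Fin 3 → ℝ) (r d : ℝ) (hr : r ^ 2 = q ⬝ᵥ q)
    (hs : p ⬝ᵥ q = 2 * d * r ^ 2) :
    gammaInner (r, q) (gammaTriple (d * r, p - d • q) (1, 0) (d * r, p - d • q))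
      = r * (p ⬝ᵥ p) := by
  simp only [gammaInner, gammaTriple, gammaProd, dotProduct, Fin.sum_univ_three] at *
  simp
  linear_combination (d ^ 2 * r) * hr

theorem LRL_X_eps (q p : Fin 3 → ℝ) (r d : ℝ) (hr : r ^ 2 = q ⬝ᵥ q)
    (hs : p ⬝ᵥ q = 2 * d * r ^ 2) (i : Fin 3) :
    gammaInner (r, q) (gammaTriple (d * r, p - d • q) (0, Pi.single i 1) (d * r, p - d • q))
      = 2 * (p ⬝ᵥ q) * p i - (p ⬝ᵥ p) * q i := by
  simp only [gammaInner, gammaTriple, gammaProd, dotProduct, Fin.sum_univ_three] at *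
  fin_cases i <;> simp
  · grind
  · grind
  · grind

theorem kepler_LRL_vector_from_dynamic_symmetry
    (q p : Fin 3 → ℝ) (hq : q ≠ 0) :
    let r : ℝ := Real.sqrt (q ⬝ᵥ q)
    let x : ℝ × (Fin 3 → ℝ) := (r, q)
    let π : ℝ × (Fin 3 → ℝ) := ((p ⬝ᵥ q) / (2 * r), p - ((p ⬝ᵥ q) / (2 * r ^ 2)) • q)
    let e : ℝ × (Fin 3 → ℝ) := (1, 0)
    let ε : Fin 3 → ℝ × (Fin 3 → ℝ) := fun i => (0, Pi.single i 1)
    let X : (ℝ × (Fin 3 → ℝ)) → ℝ := fun u => gammaInner x (gammaTriple π u π)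
    let Y : (ℝ × (Fin 3 → ℝ)) → ℝ := fun u => gammaInner u x
    let A : Fin 3 → ℝ := fun i =>
      (1 / 2 : ℝ) * (X (ε i) - Y (ε i) * X e / Y e) + Y (ε i) / Y e
    A = (crossProduct (crossProduct q p) p) + r⁻¹ • q := by
  intro r x π e ε X Y A
  have hqq : 0 < q ⬝ᵥ q := by
    have h0 : 0 ≤ q ⬝ᵥ q := Finset.sum_nonneg fun i _ => mul_self_nonneg (q i)
    exact lt_of_le_of_ne h0 fun h => hq (dotProduct_self_eq_zero.mp h.symm)
  have hr0 : 0 < r := Real.sqrt_pos.mpr hqq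
  have hr : r ^ 2 = q ⬝ᵥ q := Real.sq_sqrt hqq.le
  have hs : p ⬝ᵥ q = 2 * ((p ⬝ᵥ q) / (2 * r ^ 2)) * r ^ 2 := by field_simp
  have hπ : π = ((p ⬝ᵥ q) / (2 * r ^ 2) * r, p - ((p ⬝ᵥ q) / (2 * r ^ 2)) • q) := by
    refine Prod.ext ?_ rfl
    show (p ⬝ᵥ q) / (2 * r) = _
    field_simp
  have hXe : X e = r * (p ⬝ᵥ p) := by
    show gammaInner x (gammaTriple π e π) = _
    rw [hπ]
    exact LRL_X_e q p r _ hr hs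
  have hXi : ∀ i, X (ε i) = 2 * (p ⬝ᵥ q) * p i - (p ⬝ᵥ p) * q i := by
    intro i
    show gammaInner x (gammaTriple π (ε i) π) = _
    rw [hπ]
    exact LRL_X_eps q p r _ hr hs i
  have hYe : Y e = r := by simp [Y, e, x, gammaInner]
  have hYi : ∀ i, Y (ε i) = q i := by intro i; simp [Y, ε, x, gammaInner]
  have hA : ∀ i, A i = (p ⬝ᵥ q) * p i - (p ⬝ᵥ p) * q i + r⁻¹ * q i := by
    intro i
    show (1 / 2 : ℝ) * (X (ε i) - Y (ε i) * X e / Y e) + Y (ε i) / Y e = _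
    rw [hXe, hXi, hYe, hYi]
    field_simp
    ring
  funext i
  rw [hA]
  simp only [dotProduct, Fin.sum_univ_three]
  fin_cases i <;> simp [cross_apply] <;> ring
end
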